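/- Let (H,R) be quasitriangular with pairing ⟨·,·⟩: R_l ⊗ R_r → k as above. Then for all a ∈ R_l and b ∈ R_r, the following straightening identity holds in H: a b = ⟨a₁, b₁⟩⟨a₃, S(b₃)⟩ b₂ a₂. -/

import Mathlib

open scoped TensorProduct

structure QuasiTriangular (k H : Type*) [CommRing k] [Ring H] [HopfAlgebra k H] where
  R : H ⊗[k] H
  Sinv : H →ₗ[k] H
  Sinv_antipode : ∀ h : H, Sinv (HopfAlgebra.antipode (R := k) h) = h
  antipode_Sinv : ∀ h : H, HopfAlgebra.antipode (R := k) (Sinv h) = h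
  comul_fst : (TensorProduct.assoc k H H H)
      ((TensorProduct.map (Coalgebra.comul (R := k)) LinearMap.id) R)
    = (Algebra.TensorProduct.map (AlgHom.id k H) Algebra.TensorProduct.includeRight) R *
      Algebra.TensorProduct.includeRight R
  comul_snd : (TensorProduct.map LinearMap.id (Coalgebra.comul (R := k))) R
    = (Algebra.TensorProduct.map (AlgHom.id k H) Algebra.TensorProduct.includeRight) R *
      (Algebra.TensorProduct.map (AlgHom.id k H) Algebra.TensorProduct.includeLeft) R
  counit_fst : (TensorProduct.lid k H)
      ((TensorProduct.map (Coalgebra.counit (R := k)) LinearMap.id) R) = 1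
  counit_snd : (TensorProduct.rid k H)
      ((TensorProduct.map LinearMap.id (Coalgebra.counit (R := k))) R) = 1
  intertwine : ∀ h : H, (TensorProduct.comm k H H) (Coalgebra.comul (R := k) h) * R
    = R * Coalgebra.comul (R := k) h

variable (k H : Type*) [CommRing k] [Ring H] [HopfAlgebra k H]

/-- `θ f = f(R¹) R²`. -/
noncomputable def qtTheta (Q : QuasiTriangular k H) (f : Module.Dual k H) : H :=
  (TensorProduct.lid k H) ((TensorProduct.map f LinearMap.id) Q.R)

/-- `θ' f = R¹ f(R²)`. -/
noncomputable def qtThetaL (Q : QuasiTriangular k H) (f : Module.Dual k H) : H :=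
  (TensorProduct.rid k H) ((TensorProduct.map LinearMap.id f) Q.R)

/-- `R_l = {R¹ f(R²) : f ∈ H*}`. -/
noncomputable def Rl (Q : QuasiTriangular k H) : Submodule k H :=
  Submodule.span k {x | ∃ f : Module.Dual k H, x = qtThetaL k H Q f}

/-- `R_r = {f(R¹) R² : f ∈ H*}`. -/
noncomputable def Rr (Q : QuasiTriangular k H) : Submodule k H :=
  Submodule.span k {x | ∃ f : Module.Dual k H, x = qtTheta k H Q f}

/-- Convolution product of two elements of `H*`. -/
noncomputable def qtConv (f g : Module.Dual k H) : Module.Dual k H :=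
  (TensorProduct.lid k k).toLinearMap ∘ₗ (TensorProduct.map f g) ∘ₗ Coalgebra.comul (R := k)

/-- A subspace of a Hopf algebra which is a Hopf subalgebra. -/
def IsHopfSubalgebra (S : Submodule k H) : Prop :=
  (1 : H) ∈ S ∧ (∀ x ∈ S, ∀ y ∈ S, x * y ∈ S) ∧
  (∀ x ∈ S, Coalgebra.comul (R := k) x ∈ LinearMap.range (TensorProduct.map S.subtype S.subtype)) ∧
  (∀ x ∈ S, HopfAlgebra.antipode (R := k) x ∈ S)

/-!
Let `P = ⟨·, ·⟩` and let `M`, `M'` be the multiplication and the opposite multiplication of `H`, all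
viewed in the convolution algebra `Hom(H ⊗ H, H)`. Writing `b = θ q` and evaluating `P` by
`⟨a, θ q⟩ = q a`, the axiom `Δᵒᵖ(a) R = R Δ(a)` contracted with `q` in the first factor says
`M ⋆ P = P ⋆ M'` on `R_l ⊗ R_r`. Since `(S ⊗ S) R = R`, one has `S (θ q) = θ (q ∘ S⁻¹)`, so that
`⟨·, S ·⟩` is a right convolution inverse of `P` there. Hence `M = P ⋆ M' ⋆ ⟨·, S ·⟩`.
-/

open Coalgebra (comul counit)
open HopfAlgebra TensorProduct WithConv

section Convolution

variable {R A C D : Type*} [CommSemiring R] [Semiring A] [Algebra R A]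
  [AddCommMonoid C] [Module R C] [Coalgebra R C] [AddCommMonoid D] [Module R D] [Coalgebra R D]

lemma convMul_tmul (f g : WithConv (C ⊗[R] D →ₗ[R] A)) (c : C) (d : D) :
    (f * g) (c ⊗ₜ d) =
      LinearMap.mul' R A (map₂ (curry f.ofConv) (curry g.ofConv) (comul c) (comul d)) := by
  rw [LinearMap.convMul_apply, TensorProduct.comul_tmul]
  generalize comul (R := R) c = x, comul (R := R) d = y
  induction x with
  | zero => simp
  | add x x' hx hx' => simp only [add_tmul, map_add, LinearMap.add_apply, hx, hx']
  | tmul c₁ c₂ =>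
    induction y with
    | zero => simp
    | add y y' hy hy' => simp only [tmul_add, map_add, hy, hy']
    | tmul d₁ d₂ => simp

lemma convMul_tmul_eq_sum (f g : WithConv (C ⊗[R] D →ₗ[R] A)) {c : C} {d : D} {ι κ : Type*}
    {s : Finset ι} {c₁ c₂ : ι → C} (hc : comul c = ∑ i ∈ s, c₁ i ⊗ₜ[R] c₂ i)
    {t : Finset κ} {d₁ d₂ : κ → D} (hd : comul d = ∑ j ∈ t, d₁ j ⊗ₜ[R] d₂ j) :
    (f * g) (c ⊗ₜ d) = ∑ i ∈ s, ∑ j ∈ t, f (c₁ i ⊗ₜ d₁ j) * g (c₂ i ⊗ₜ d₂ j) := by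
  rw [convMul_tmul, hc, hd, Finset.sum_comm]
  simp

lemma convMul_convMul_tmul_eq_sum (f g h : WithConv (C ⊗[R] D →ₗ[R] A)) {c : C} {d : D}
    {ι κ : Type*} {s : Finset ι} {c₁ c₂ c₃ : ι → C}
    (hc : comul.lTensor C (comul c) = ∑ i ∈ s, c₁ i ⊗ₜ[R] (c₂ i ⊗ₜ[R] c₃ i))
    {t : Finset κ} {d₁ d₂ d₃ : κ → D}
    (hd : comul.lTensor D (comul d) = ∑ j ∈ t, d₁ j ⊗ₜ[R] (d₂ j ⊗ₜ[R] d₃ j)) :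
    (f * (g * h)) (c ⊗ₜ d) =
      ∑ i ∈ s, ∑ j ∈ t, f (c₁ i ⊗ₜ d₁ j) * (g (c₂ i ⊗ₜ d₂ j) * h (c₃ i ⊗ₜ d₃ j)) := by
  have map₂_curry_mul (x : C ⊗[R] C) (y : D ⊗[R] D) :
      map₂ (curry f.ofConv) (curry (g * h).ofConv) x y =
        (LinearMap.mul' R A).lTensor A
          (map₂ (curry f.ofConv) (map₂ (curry g.ofConv) (curry h.ofConv))
            (comul.lTensor C x) (comul.lTensor D y)) := by
    induction x with
    | zero => simp
    | add x x' hx hx' => simp only [map_add, LinearMap.add_apply, hx, hx']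
    | tmul c₁ c₂ =>
      induction y with
      | zero => simp
      | add y y' hy hy' => simp only [map_add, hy, hy']
      | tmul d₁ d₂ => simp [convMul_tmul, -LinearMap.convMul_apply]
  rw [convMul_tmul, map₂_curry_mul, hc, hd, Finset.sum_comm]
  simp

end Convolution

namespace QuasiTriangular

variable {k H} {Q : QuasiTriangular k H}

lemma qtConv_apply_eq_sum (f g : Module.Dual k H) {a : H} {ι : Type*} {s : Finset ι}
    {a₁ a₂ : ι → H} (ha : comul a = ∑ i ∈ s, a₁ i ⊗ₜ[k] a₂ i) :
    qtConv k H f g a = ∑ i ∈ s, f (a₁ i) * g (a₂ i) := by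
  simp [qtConv, ha]

section Expansion

variable {ι : Type*} {s : Finset ι} {x y : ι → H}

lemma qtTheta_eq_sum (hR : Q.R = ∑ i ∈ s, x i ⊗ₜ[k] y i) (q : Module.Dual k H) :
    qtTheta k H Q q = ∑ i ∈ s, q (x i) • y i := by
  simp [qtTheta, hR]

lemma qtThetaL_eq_sum (hR : Q.R = ∑ i ∈ s, x i ⊗ₜ[k] y i) (p : Module.Dual k H) :
    qtThetaL k H Q p = ∑ i ∈ s, p (y i) • x i := by
  simp [qtThetaL, hR]

lemma sum_comul_tmul (hR : Q.R = ∑ i ∈ s, x i ⊗ₜ[k] y i) :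
    ∑ i ∈ s, TensorProduct.assoc k H H H (comul (x i) ⊗ₜ[k] y i) =
      ∑ i ∈ s, ∑ j ∈ s, x i ⊗ₜ[k] (x j ⊗ₜ[k] (y i * y j)) := by
  simpa [hR, Finset.sum_mul_sum] using Q.comul_fst

lemma sum_tmul_comul (hR : Q.R = ∑ i ∈ s, x i ⊗ₜ[k] y i) :
    ∑ i ∈ s, x i ⊗ₜ[k] comul (R := k) (y i) =
      ∑ i ∈ s, ∑ j ∈ s, (x i * x j) ⊗ₜ[k] (y j ⊗ₜ[k] y i) := by
  simpa [hR, Finset.sum_mul_sum] using Q.comul_snd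

lemma comul_qtThetaL (hR : Q.R = ∑ i ∈ s, x i ⊗ₜ[k] y i) (p : Module.Dual k H) :
    comul (qtThetaL k H Q p) = ∑ i ∈ s, ∑ j ∈ s, p (y i * y j) • (x i ⊗ₜ[k] x j) := by
  have h := congr((TensorProduct.rid k (H ⊗[k] H)) (p.lTensor (H ⊗[k] H)
    ((TensorProduct.assoc k H H H).symm $(sum_comul_tmul hR))))
  simpa [qtThetaL_eq_sum hR] using h

lemma comul_qtTheta (hR : Q.R = ∑ i ∈ s, x i ⊗ₜ[k] y i) (q : Module.Dual k H) :
    comul (qtTheta k H Q q) = ∑ i ∈ s, ∑ j ∈ s, q (x i * x j) • (y j ⊗ₜ[k] y i) := by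
  have h := congr((TensorProduct.lid k (H ⊗[k] H)) (q.rTensor (H ⊗[k] H) $(sum_tmul_comul hR)))
  simpa [qtTheta_eq_sum hR] using h

lemma comul_qtThetaL_eq_sum_qtThetaL_tmul (hR : Q.R = ∑ i ∈ s, x i ⊗ₜ[k] y i)
    (p : Module.Dual k H) :
    comul (qtThetaL k H Q p) =
      ∑ j ∈ s, qtThetaL k H Q (p ∘ₗ LinearMap.mulRight k (y j)) ⊗ₜ[k] x j := by
  rw [comul_qtThetaL hR, Finset.sum_comm]
  simp [qtThetaL_eq_sum hR, sum_tmul, smul_tmul']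

lemma comul_qtThetaL_eq_sum_tmul_qtThetaL (hR : Q.R = ∑ i ∈ s, x i ⊗ₜ[k] y i)
    (p : Module.Dual k H) :
    comul (qtThetaL k H Q p) =
      ∑ i ∈ s, x i ⊗ₜ[k] qtThetaL k H Q (p ∘ₗ LinearMap.mulLeft k (y i)) := by
  rw [comul_qtThetaL hR]
  simp [qtThetaL_eq_sum hR, tmul_sum]

lemma comul_qtTheta_eq_sum_qtTheta_tmul (hR : Q.R = ∑ i ∈ s, x i ⊗ₜ[k] y i)
    (q : Module.Dual k H) :
    comul (qtTheta k H Q q) =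
      ∑ i ∈ s, qtTheta k H Q (q ∘ₗ LinearMap.mulLeft k (x i)) ⊗ₜ[k] y i := by
  rw [comul_qtTheta hR]
  simp [qtTheta_eq_sum hR, sum_tmul, smul_tmul']

lemma comul_qtTheta_eq_sum_tmul_qtTheta (hR : Q.R = ∑ i ∈ s, x i ⊗ₜ[k] y i)
    (q : Module.Dual k H) :
    comul (qtTheta k H Q q) =
      ∑ j ∈ s, y j ⊗ₜ[k] qtTheta k H Q (q ∘ₗ LinearMap.mulRight k (x j)) := by
  rw [comul_qtTheta hR, Finset.sum_comm]
  simp [qtTheta_eq_sum hR, tmul_sum]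

end Expansion

section Antipode

lemma Sinv_one : Q.Sinv 1 = 1 := by
  simpa using Q.Sinv_antipode 1

lemma Sinv_mul (u v : H) : Q.Sinv (u * v) = Q.Sinv v * Q.Sinv u := by
  rw [← Q.Sinv_antipode (Q.Sinv v * Q.Sinv u), antipode_mul_antidistrib, Q.antipode_Sinv,
    Q.antipode_Sinv]

lemma sum_Sinv_mul_eq_counit_smul_one {a : H} {ι : Type*} {s : Finset ι} {a₁ a₂ : ι → H}
    (ha : comul a = ∑ i ∈ s, a₁ i ⊗ₜ[k] a₂ i) :
    ∑ i ∈ s, Q.Sinv (a₂ i) * a₁ i = counit (R := k) a • 1 := by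
  have h := congr(Q.Sinv $(sum_antipode_mul_eq_smul ⟨s, a₁, a₂, ha.symm⟩))
  simpa [Sinv_mul, Q.Sinv_antipode, Sinv_one] using h

lemma R_mul_map_antipode_id : Q.R * map (antipode k) .id Q.R = 1 := by
  obtain ⟨s, hR⟩ := exists_finset Q.R
  have h := congr((LinearMap.mul' k H ∘ₗ (antipode k).lTensor H).rTensor H
    ((TensorProduct.assoc k H H H).symm $(sum_comul_tmul hR)))
  simp only [map_sum, LinearEquiv.symm_apply_apply, LinearMap.rTensor_tmul, LinearMap.comp_apply,
    mul_antipode_lTensor_comul_apply, assoc_symm_tmul, LinearMap.lTensor_tmul,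
    LinearMap.mul'_apply] at h
  calc
    _ = ∑ i ∈ s, algebraMap k H (counit i.1) ⊗ₜ[k] i.2 := by
      simp [h, hR, Finset.sum_mul_sum]
    _ = 1 ⊗ₜ[k] TensorProduct.lid k H (map counit .id Q.R) := by
      simp [hR, tmul_sum, Algebra.algebraMap_eq_smul_one, smul_tmul]
    _ = 1 := by rw [Q.counit_fst, Algebra.TensorProduct.one_def]

lemma map_antipode_id_mul_map_antipode_antipode :
    map (antipode k) .id Q.R * map (antipode k) (antipode k) Q.R = 1 := by
  obtain ⟨s, hR⟩ := exists_finset Q.R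
  have h := congr(map (antipode k) (LinearMap.mul' k H ∘ₗ (antipode k).lTensor H)
    $(sum_tmul_comul hR))
  simp only [map_sum, map_tmul, LinearMap.comp_apply, mul_antipode_lTensor_comul_apply,
    LinearMap.lTensor_tmul, LinearMap.mul'_apply, antipode_mul_antidistrib] at h
  calc
    _ = ∑ i ∈ s, antipode k i.1 ⊗ₜ[k] algebraMap k H (counit i.2) := by
      rw [h, Finset.sum_comm]
      simp [hR, Finset.sum_mul_sum]
    _ = antipode k (TensorProduct.rid k H (map .id counit Q.R)) ⊗ₜ[k] 1 := by
      simp [hR, sum_tmul, Algebra.algebraMap_eq_smul_one, smul_tmul]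
    _ = 1 := by rw [Q.counit_snd, antipode_one, Algebra.TensorProduct.one_def]

lemma map_antipode_antipode_R : map (antipode k) (antipode k) Q.R = Q.R :=
  (left_inv_eq_right_inv R_mul_map_antipode_id map_antipode_id_mul_map_antipode_antipode).symm

lemma antipode_qtTheta (q : Module.Dual k H) :
    antipode k (qtTheta k H Q q) = qtTheta k H Q (q ∘ₗ Q.Sinv) := by
  obtain ⟨s, hR⟩ := exists_finset Q.R
  have h := congr(TensorProduct.lid k H (map (q ∘ₗ Q.Sinv) .id $(map_antipode_antipode_R (Q := Q))))
  simpa [qtTheta, hR, Q.Sinv_antipode] using h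

lemma counit_qtTheta (q : Module.Dual k H) : counit (R := k) (qtTheta k H Q q) = q 1 := by
  obtain ⟨s, hR⟩ := exists_finset Q.R
  have h := congr(q $(Q.counit_snd))
  simpa [qtTheta_eq_sum hR, hR, mul_comm] using h

end Antipode

section Subspaces

lemma mem_Rl {a : H} : a ∈ Rl k H Q ↔ ∃ p, a = qtThetaL k H Q p := by
  refine ⟨fun h ↦ ?_, fun h ↦ Submodule.subset_span h⟩
  let F : Module.Dual k H →ₗ[k] H :=
    (TensorProduct.rid k H).toLinearMap ∘ₗ LinearMap.applyₗ Q.R ∘ₗ LinearMap.lTensorHom H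
  have hF : Rl k H Q ≤ LinearMap.range F :=
    Submodule.span_le.2 (by rintro _ ⟨p, rfl⟩; exact ⟨p, rfl⟩)
  obtain ⟨p, rfl⟩ := hF h
  exact ⟨p, rfl⟩

lemma mem_Rr {b : H} : b ∈ Rr k H Q ↔ ∃ q, b = qtTheta k H Q q := by
  refine ⟨fun h ↦ ?_, fun h ↦ Submodule.subset_span h⟩
  let F : Module.Dual k H →ₗ[k] H :=
    (TensorProduct.lid k H).toLinearMap ∘ₗ LinearMap.applyₗ Q.R ∘ₗ LinearMap.rTensorHom H
  have hF : Rr k H Q ≤ LinearMap.range F :=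
    Submodule.span_le.2 (by rintro _ ⟨q, rfl⟩; exact ⟨q, rfl⟩)
  obtain ⟨q, rfl⟩ := hF h
  exact ⟨q, rfl⟩

lemma qtThetaL_mem_Rl (p : Module.Dual k H) : qtThetaL k H Q p ∈ Rl k H Q := mem_Rl.2 ⟨p, rfl⟩

lemma qtTheta_mem_Rr (q : Module.Dual k H) : qtTheta k H Q q ∈ Rr k H Q := mem_Rr.2 ⟨q, rfl⟩

variable {A : Type*} [Semiring A] [Algebra k A] {f f' : WithConv (H ⊗[k] H →ₗ[k] A)}

lemma convMul_tmul_congr_left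
    (hf : ∀ a ∈ Rl k H Q, ∀ b ∈ Rr k H Q, f (a ⊗ₜ b) = f' (a ⊗ₜ b))
    (g : WithConv (H ⊗[k] H →ₗ[k] A)) {a b : H} (ha : a ∈ Rl k H Q) (hb : b ∈ Rr k H Q) :
    (f * g) (a ⊗ₜ b) = (f' * g) (a ⊗ₜ b) := by
  obtain ⟨p, rfl⟩ := mem_Rl.1 ha
  obtain ⟨q, rfl⟩ := mem_Rr.1 hb
  obtain ⟨s, hR⟩ := exists_finset Q.R
  have hp := comul_qtThetaL_eq_sum_qtThetaL_tmul hR p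
  have hq := comul_qtTheta_eq_sum_qtTheta_tmul hR q
  simp only [convMul_tmul_eq_sum _ _ hp hq, hf _ (qtThetaL_mem_Rl _) _ (qtTheta_mem_Rr _)]

lemma convMul_tmul_congr_right
    (hf : ∀ a ∈ Rl k H Q, ∀ b ∈ Rr k H Q, f (a ⊗ₜ b) = f' (a ⊗ₜ b))
    (g : WithConv (H ⊗[k] H →ₗ[k] A)) {a b : H} (ha : a ∈ Rl k H Q) (hb : b ∈ Rr k H Q) :
    (g * f) (a ⊗ₜ b) = (g * f') (a ⊗ₜ b) := by
  obtain ⟨p, rfl⟩ := mem_Rl.1 ha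
  obtain ⟨q, rfl⟩ := mem_Rr.1 hb
  obtain ⟨s, hR⟩ := exists_finset Q.R
  have hp := comul_qtThetaL_eq_sum_tmul_qtThetaL hR p
  have hq := comul_qtTheta_eq_sum_tmul_qtTheta hR q
  simp only [convMul_tmul_eq_sum _ _ hp hq, hf _ (qtThetaL_mem_Rl _) _ (qtTheta_mem_Rr _)]

end Subspaces

section Pairing

variable (k H) in
/-- The multiplication of `H` as an element `a ⊗ b ↦ a b` of the convolution algebra
`Hom(H ⊗ H, H)`. -/
noncomputable def mulConv : WithConv (H ⊗[k] H →ₗ[k] H) := toConv (LinearMap.mul' k H)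

variable (k H) in
/-- The opposite multiplication of `H` as an element `a ⊗ b ↦ b a` of the convolution algebra
`Hom(H ⊗ H, H)`. -/
noncomputable def mulOpConv : WithConv (H ⊗[k] H →ₗ[k] H) :=
  toConv (LinearMap.mul' k H ∘ₗ (TensorProduct.comm k H H).toLinearMap)

/-- A bilinear form on `H` as an element `a ⊗ b ↦ ⟨a, b⟩ 1` of the convolution algebra
`Hom(H ⊗ H, H)`. -/
noncomputable def pairingConv (B : H →ₗ[k] H →ₗ[k] k) : WithConv (H ⊗[k] H →ₗ[k] H) :=
  toConv (Algebra.linearMap k H ∘ₗ lift B)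

@[simp] lemma mulConv_tmul (a b : H) : mulConv k H (a ⊗ₜ b) = a * b := rfl

@[simp] lemma mulOpConv_tmul (a b : H) : mulOpConv k H (a ⊗ₜ b) = b * a := rfl

@[simp] lemma pairingConv_tmul (B : H →ₗ[k] H →ₗ[k] k) (a b : H) :
    pairingConv B (a ⊗ₜ b) = algebraMap k H (B a b) := rfl

variable {pairL : H →ₗ[k] H →ₗ[k] k}

lemma pairingConv_mul_mulOpConv_tmul
    (hchar : ∀ (f : Module.Dual k H) (a : H), a ∈ Rl k H Q → pairL a (qtTheta k H Q f) = f a)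
    {a b : H} (ha : a ∈ Rl k H Q) (hb : b ∈ Rr k H Q) :
    (pairingConv pairL * mulOpConv k H) (a ⊗ₜ b) = (mulConv k H * pairingConv pairL) (a ⊗ₜ b) := by
  obtain ⟨p, rfl⟩ := mem_Rl.1 ha
  obtain ⟨q, rfl⟩ := mem_Rr.1 hb
  obtain ⟨s, hR⟩ := exists_finset Q.R
  have hl := comul_qtThetaL_eq_sum_qtThetaL_tmul hR p
  have hr := comul_qtThetaL_eq_sum_tmul_qtThetaL hR p
  calc
    _ = ∑ j ∈ s, ∑ i ∈ s,
          algebraMap k H (q (i.1 * qtThetaL k H Q (p ∘ₗ LinearMap.mulRight k j.2))) *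
            (i.2 * j.1) := by
      simp [convMul_tmul_eq_sum _ _ hl (comul_qtTheta_eq_sum_qtTheta_tmul hR q),
        hchar _ _ (qtThetaL_mem_Rl _), -LinearMap.convMul_apply]
    _ = TensorProduct.lid k H (map q .id (Q.R * comul (qtThetaL k H Q p))) := by
      rw [hl, hR, Finset.sum_mul_sum, Finset.sum_comm]
      simp [Algebra.smul_def]
    _ = TensorProduct.lid k H
          (map q .id (TensorProduct.comm k H H (comul (qtThetaL k H Q p)) * Q.R)) := by
      rw [Q.intertwine]
    _ = ∑ i ∈ s, ∑ j ∈ s,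
          i.1 * j.2 * algebraMap k H
            (q (qtThetaL k H Q (p ∘ₗ LinearMap.mulLeft k i.2) * j.1)) := by
      rw [hr, hR, map_sum, Finset.sum_mul_sum]
      simp [Algebra.smul_def, Algebra.commutes]
    _ = _ := by
      simp [convMul_tmul_eq_sum _ _ hr (comul_qtTheta_eq_sum_tmul_qtTheta hR q),
        hchar _ _ (qtThetaL_mem_Rl _), -LinearMap.convMul_apply, mul_assoc]

lemma pairingConv_mul_pairingConv_antipode_tmul
    (hchar : ∀ (f : Module.Dual k H) (a : H), a ∈ Rl k H Q → pairL a (qtTheta k H Q f) = f a)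
    {a b : H} (ha : a ∈ Rl k H Q) (hb : b ∈ Rr k H Q) :
    (pairingConv pairL * pairingConv (pairL.compl₂ (antipode k))) (a ⊗ₜ b) =
      (1 : WithConv (H ⊗[k] H →ₗ[k] H)) (a ⊗ₜ b) := by
  obtain ⟨p, rfl⟩ := mem_Rl.1 ha
  obtain ⟨q, rfl⟩ := mem_Rr.1 hb
  obtain ⟨s, hR⟩ := exists_finset Q.R
  set a := qtThetaL k H Q p
  have hl : comul a = _ := comul_qtThetaL_eq_sum_qtThetaL_tmul hR p
  have hr : comul a = _ := comul_qtThetaL_eq_sum_tmul_qtThetaL hR p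
  have sum_pairing (u v : H) (hu : u ∈ Rl k H Q) :
      ∑ j ∈ s, pairL u j.2 * q (Q.Sinv v * j.1) = q (Q.Sinv v * u) := by
    have h := hchar (q ∘ₗ LinearMap.mulLeft k (Q.Sinv v)) u hu
    simpa [qtTheta_eq_sum hR, mul_comm] using h
  -- Through `qtConv` one passes from the expansion of `Δ a` with right factors in `R_l`, on which
  -- `⟨·, S ·⟩` is computed, to the one with left factors in `R_l`, on which `⟨·, ·⟩` is.
  calc
    _ = ∑ j ∈ s, algebraMap k H
          (qtConv k H (pairL.flip j.2) (q ∘ₗ LinearMap.mulRight k j.1 ∘ₗ Q.Sinv) a) := by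
      rw [convMul_tmul_eq_sum _ _ hr (comul_qtTheta_eq_sum_tmul_qtTheta hR q), Finset.sum_comm]
      simp [antipode_qtTheta, hchar _ _ (qtThetaL_mem_Rl _), qtConv_apply_eq_sum _ _ hr]
    _ = algebraMap k H (q (∑ i ∈ s,
          Q.Sinv i.1 * qtThetaL k H Q (p ∘ₗ LinearMap.mulRight k i.2))) := by
      simp only [qtConv_apply_eq_sum _ _ hl, ← map_sum]
      rw [Finset.sum_comm]
      simp [sum_pairing _ _ (qtThetaL_mem_Rl _)]
    _ = algebraMap k H (counit a * counit (qtTheta k H Q q)) := by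
      rw [sum_Sinv_mul_eq_counit_smul_one hl, map_smul, counit_qtTheta, smul_eq_mul]
    _ = _ := by
      rw [LinearMap.convOne_apply, TensorProduct.counit_tmul, smul_eq_mul, mul_comm]

end Pairing

end QuasiTriangular

open QuasiTriangular in
theorem radford_straightening_general
    (k H : Type*) [CommRing k] [Ring H] [HopfAlgebra k H] (Q : QuasiTriangular k H)
    (pairL : H →ₗ[k] H →ₗ[k] k)
    (hchar : ∀ (f : Module.Dual k H) (a : H), a ∈ Rl k H Q →
      pairL a (qtTheta k H Q f) = f a)
    (a b : H) (ha : a ∈ Rl k H Q) (hb : b ∈ Rr k H Q)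
    (n : ℕ) (a1 a2 a3 : Fin n → H)
    (hA : (∑ i, a1 i ⊗ₜ[k] (a2 i ⊗ₜ[k] a3 i))
      = (TensorProduct.map LinearMap.id (Coalgebra.comul (R := k)))
          (Coalgebra.comul (R := k) a))
    (m : ℕ) (b1 b2 b3 : Fin m → H)
    (hB : (∑ j, b1 j ⊗ₜ[k] (b2 j ⊗ₜ[k] b3 j))
      = (TensorProduct.map LinearMap.id (Coalgebra.comul (R := k)))
          (Coalgebra.comul (R := k) b)) :
    a * b = ∑ i, ∑ j,
      (pairL (a1 i) (b1 j) * pairL (a3 i) (HopfAlgebra.antipode (R := k) (b3 j)))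
        • (b2 j * a2 i) := by
  let M := mulConv k H
  let M' := mulOpConv k H
  let P := pairingConv pairL
  let P' := pairingConv (pairL.compl₂ (antipode k))
  calc
    a * b = (M * 1) (a ⊗ₜ b) := by rw [mul_one]; rfl
    _ = (M * (P * P')) (a ⊗ₜ b) := (convMul_tmul_congr_right
        (fun _ hc _ hd ↦ pairingConv_mul_pairingConv_antipode_tmul hchar hc hd) M ha hb).symm
    _ = (M * P * P') (a ⊗ₜ b) := by rw [mul_assoc]
    _ = (P * M' * P') (a ⊗ₜ b) := (convMul_tmul_congr_left
        (fun _ hc _ hd ↦ pairingConv_mul_mulOpConv_tmul hchar hc hd) P' ha hb).symm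
    _ = (P * (M' * P')) (a ⊗ₜ b) := by rw [mul_assoc]
    _ = _ := by
      rw [convMul_convMul_tmul_eq_sum P M' P' hA.symm hB.symm]
      simp [P, M', P', mul_comm (pairL (a1 _) _), mul_smul, ← Algebra.smul_def, ← Algebra.commutes]

/- STATEMENT 8: the straightening identity `a b = ⟨a₁, b₁⟩ ⟨a₃, S(b₃)⟩ b₂ a₂` in `H`, for
`a ∈ R_l`, `b ∈ R_r`.  The iterated comultiplications are expressed through arbitrary finite
representations of `(id ⊗ Δ)(Δ a)` and `(id ⊗ Δ)(Δ b)` in `H ⊗ (H ⊗ H)`. -/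
theorem radford_straightening
    (k H : Type*) [Field k] [Ring H] [HopfAlgebra k H] (Q : QuasiTriangular k H)
    (pairL : H →ₗ[k] H →ₗ[k] k)
    (hchar : ∀ (f : Module.Dual k H) (a : H), a ∈ Rl k H Q →
      pairL a (qtTheta k H Q f) = f a)
    (a b : H) (ha : a ∈ Rl k H Q) (hb : b ∈ Rr k H Q)
    (n : ℕ) (a1 a2 a3 : Fin n → H)
    (hA : (∑ i, a1 i ⊗ₜ[k] (a2 i ⊗ₜ[k] a3 i))
      = (TensorProduct.map LinearMap.id (Coalgebra.comul (R := k)))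
          (Coalgebra.comul (R := k) a))
    (m : ℕ) (b1 b2 b3 : Fin m → H)
    (hB : (∑ j, b1 j ⊗ₜ[k] (b2 j ⊗ₜ[k] b3 j))
      = (TensorProduct.map LinearMap.id (Coalgebra.comul (R := k)))
          (Coalgebra.comul (R := k) b)) :
    a * b = ∑ i, ∑ j,
      (pairL (a1 i) (b1 j) * pairL (a3 i) (HopfAlgebra.antipode (R := k) (b3 j)))
        • (b2 j * a2 i) :=
  radford_straightening_general k H Q pairL hchar a b ha hb n a1 a2 a3 hA m b1 b2 b3 hB
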